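/- arXiv:1207.7246 — 3 statements merged into one kernel-verified Lean document; each statement's English description precedes it below -/
import Mathlib

section
/- Let d ≥ 1 and let C ⊆ ℝ^d be a compact convex set that is symmetric about the origin (C = -C) and contains the closed unit ball B^d. Suppose B^d is the unique ellipsoid of maximum volume contained in C, i.e., for every invertible d×d real matrix M and every a ∈ ℝ^d with M(B^d) + a ⊆ C one has |det M| ≤ 1, and |det M| = 1 implies M(B^d) + a = B^d. Then there exist an integer n with d ≤ n ≤ d(d+1)/2, unit vectors u_1, …, u_n ∈ S^{d-1} ∩ bd C, and real numbers λ_1, …, λ_n > 0 such that the identity matrix satisfies I = Σ_{k=1}^n λ_k u_k⊗u_k. -/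
/-!
Let `X` be the compact set of contact points. By Carathéodory's theorem it is enough that `I / d`
lies in the convex hull of the matrices `u ⊗ u`, `u ∈ X`: the points it provides are affinely
independent and of trace one, hence linearly independent in the space of symmetric matrices,
which has dimension `d (d + 1) / 2` (`card_le_of_affineIndependent`), and they number at least
`d` because a resolution of the identity spans (`le_card_of_one_eq_sum`).

If `I / d` were not in this hull, which is compact, a strictly separating functional, corrected by
a multiple of the trace, would give a matrix `G` with `tr G > 0` and `⟪u, G u⟫ < 0` on `X`. For
small `t > 0` the matrix `1 + t G` then has determinant greater than one
(`eventually_one_lt_det`), while it still maps the unit ball into `C` (`eventually_image_subset`),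
contradicting maximality of the ball. Strict separation makes the first-order gain in volume
positive, so it outweighs the second-order loss.
-/

open RealInnerProductSpace

open Filter Topology

/-- In finite dimension the convex hull of a compact set is compact: Carathéodory's theorem
bounds the number of points needed, so the hull is the continuous image of the product of a
standard simplex and a power of `s`. -/
lemma isCompact_convexHull_of_finiteDimensional {E : Type*} [NormedAddCommGroup E]
    [NormedSpace ℝ E] [FiniteDimensional ℝ E] {s : Set E} (hs : IsCompact s) :
    IsCompact (convexHull ℝ s) := by
  rcases s.eq_empty_or_nonempty with rfl | ⟨x₀, hx₀⟩
  · simp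
  set N := Module.finrank ℝ E + 1 with hN
  let Φ : (Fin N → ℝ) × (Fin N → E) → E := fun p => ∑ i, p.1 i • p.2 i
  have hΦ : Continuous Φ := by fun_prop
  have hcomp : IsCompact ((stdSimplex ℝ (Fin N)) ×ˢ (Set.univ.pi fun _ : Fin N => s)) :=
    (isCompact_stdSimplex ℝ (Fin N)).prod (isCompact_univ_pi fun _ => hs)
  convert hcomp.image hΦ using 1
  ext x
  constructor
  · intro hx
    obtain ⟨ι, _, z, w, hz, haff, hw, hw1, rfl⟩ := eq_pos_convex_span_of_mem_convexHull hx
    have hcard : Fintype.card ι ≤ N := haff.card_le_finrank_succ.trans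
      (Nat.succ_le_succ (Submodule.finrank_le _))
    have e : Fin N ≃ ι ⊕ Fin (N - Fintype.card ι) := Fintype.equivOfCardEq (by simp; omega)
    -- Unused slots get weight zero at the base point `x₀`.
    refine ⟨(fun i => Sum.elim w (fun _ => 0) (e i), fun i => Sum.elim z (fun _ => x₀) (e i)),
      ⟨⟨fun i => ?_, ?_⟩, fun i _ => ?_⟩, ?_⟩
    · dsimp only
      rcases e i with j | j
      · exact (hw j).le
      · exact le_rfl
    · dsimp only
      rw [e.sum_comp (fun j => Sum.elim w (fun _ => (0 : ℝ)) j)]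
      simpa using hw1
    · dsimp only
      rcases e i with j | j
      · exact hz ⟨j, rfl⟩
      · exact hx₀
    · simp only [Φ]
      rw [e.sum_comp (fun j => Sum.elim w (fun _ => (0 : ℝ)) j • Sum.elim z (fun _ => x₀) j)]
      simp
  · rintro ⟨p, ⟨⟨h0, h1⟩, hp⟩, rfl⟩
    exact (convex_convexHull ℝ s).sum_mem (fun i _ => h0 i) h1
      (fun i _ => subset_convexHull ℝ s (hp i trivial))

/-- A matrix of positive trace increases the volume to first order: `det (1 + t G) > 1`
for all small `t > 0`. -/
lemma eventually_one_lt_det {d : ℕ} (G : Matrix (Fin d) (Fin d) ℝ) (hG : 0 < G.trace) :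
    ∀ᶠ t : ℝ in 𝓝[>] 0, 1 < (1 + t • G).det := by
  set p := (Matrix.det (1 + (Polynomial.X : Polynomial ℝ) • G.map Polynomial.C)).divX.divX
    with hp
  have hc : Continuous fun t : ℝ => G.trace + p.eval t * t := by fun_prop
  have h0 : ∀ᶠ t : ℝ in 𝓝 0, 0 < G.trace + p.eval t * t :=
    hc.continuousAt.eventually (lt_mem_nhds (by simpa using hG))
  filter_upwards [nhdsWithin_le_nhds h0, self_mem_nhdsWithin] with t ht ht0
  have ht0 : 0 < t := ht0
  rw [Matrix.det_one_add_smul]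
  nlinarith [mul_pos ht0 ht]

/-- If the quadratic form of `G` is negative at every contact point, then the linear perturbation
`1 + t G` maps the unit ball into `C` for all small `t > 0`. Otherwise hyperplanes
separating `C` from the images of points of the ball as `t → 0` would have unit normals that
accumulate at a contact point where the form is nonnegative. -/
lemma eventually_image_subset {E : Type*} [NormedAddCommGroup E] [InnerProductSpace ℝ E]
    [FiniteDimensional ℝ E] {C : Set E}
    (hCcl : IsClosed C) (hCconv : Convex ℝ C) (hball : Metric.closedBall (0 : E) 1 ⊆ C)
    (G : E →L[ℝ] E)
    (hG : ∀ u ∈ Metric.sphere (0 : E) 1 ∩ frontier C, inner ℝ u (G u) < 0) :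
    ∀ᶠ t : ℝ in 𝓝[>] 0, ∀ x ∈ Metric.closedBall (0 : E) 1, x + t • G x ∈ C := by
  by_contra hcon
  rw [not_eventually] at hcon
  obtain ⟨t, ht, hbad⟩ := exists_seq_forall_of_frequently hcon
  have ht0 : Tendsto t atTop (𝓝 0) := tendsto_nhds_of_tendsto_nhdsWithin ht
  have key : ∀ n, ∃ x ∈ Metric.closedBall (0 : E) 1, ∃ p ∈ Metric.sphere (0 : E) 1,
      ∀ y ∈ C, inner ℝ p y < inner ℝ p (x + t n • G x) := by
    intro n
    have := hbad n
    push Not at this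
    obtain ⟨x, hx, hxC⟩ := this
    obtain ⟨f, c, hf, hc⟩ := geometric_hahn_banach_closed_point hCconv hCcl hxC
    set q := (InnerProductSpace.toDual ℝ E).symm f with hq
    have hqf : ∀ y, inner ℝ q y = f y := fun y => InnerProductSpace.toDual_symm_apply
    have hq0 : q ≠ 0 := by
      intro h
      have h1 := hf 0 (hball (by simp))
      rw [← hqf, h, inner_zero_left] at hc
      rw [map_zero] at h1
      linarith
    refine ⟨x, hx, ‖q‖⁻¹ • q, by simp [norm_smul, hq0], fun y hy => ?_⟩
    rw [real_inner_smul_left, real_inner_smul_left, hqf, hqf]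
    have : 0 < ‖q‖⁻¹ := by positivity
    exact mul_lt_mul_of_pos_left ((hf y hy).trans hc) this
  choose x hx p hp hsep using key
  obtain ⟨x', hx', φ, hφ, hxlim⟩ := (isCompact_closedBall (0 : E) 1).tendsto_subseq hx
  obtain ⟨p', hp', ψ, hψ, hplim⟩ := (isCompact_sphere (0 : E) 1).tendsto_subseq
    (fun n => hp (φ n))
  have hxlim' : Tendsto (fun n => x (φ (ψ n))) atTop (𝓝 x') := hxlim.comp hψ.tendsto_atTop
  have hplim' : Tendsto (fun n => p (φ (ψ n))) atTop (𝓝 p') := hplim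
  have htlim : Tendsto (fun n => t (φ (ψ n))) atTop (𝓝 0) :=
    ht0.comp (hφ.tendsto_atTop.comp hψ.tendsto_atTop)
  have hGx := (G.continuous.tendsto x').comp hxlim'
  have hrhs : Tendsto (fun n => inner ℝ (p (φ (ψ n))) (x (φ (ψ n)) + t (φ (ψ n)) •
      G (x (φ (ψ n))))) atTop (𝓝 (inner ℝ p' (x' + (0 : ℝ) • G x'))) :=
    hplim'.inner (hxlim'.add (htlim.smul hGx))
  rw [zero_smul, add_zero] at hrhs
  have hle : ∀ y ∈ C, inner ℝ p' y ≤ inner ℝ p' x' := fun y hy =>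
    le_of_tendsto_of_tendsto' (hplim'.inner tendsto_const_nhds) hrhs
      (fun n => (hsep _ y hy).le)
  have hp1 : ‖p'‖ = 1 := by simpa using hp'
  have hx1 : ‖x'‖ ≤ 1 := by simpa using hx'
  have hpx : inner ℝ p' x' = 1 := by
    apply le_antisymm
    · have := real_inner_le_norm p' x'
      rw [hp1, one_mul] at this
      exact this.trans hx1
    · have := hle p' (hball (by simp [hp1]))
      rwa [real_inner_self_eq_norm_sq, hp1, one_pow] at this
  have hxp : x' = p' := by
    have h := norm_sub_sq_real p' x'
    rw [hpx, hp1] at h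
    have h2 : ‖p' - x'‖ ^ 2 ≤ 0 := by nlinarith [norm_nonneg x']
    have h3 : ‖p' - x'‖ = 0 := by nlinarith [norm_nonneg (p' - x')]
    exact (sub_eq_zero.mp (norm_eq_zero.mp h3)).symm
  subst hxp
  have hfr : x' ∈ frontier C := by
    rw [hCcl.frontier_eq]
    refine ⟨hball hx', fun hint => ?_⟩
    -- An interior point could be pushed outwards along the normal.
    have hc : Tendsto (fun s : ℝ => (1 + s) • x') (𝓝[>] 0) (𝓝 x') := by
      have : Continuous fun s : ℝ => (1 + s) • x' := by fun_prop
      simpa using (this.tendsto 0).mono_left nhdsWithin_le_nhds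
    obtain ⟨s, hs, hs0⟩ := ((hc.eventually (isOpen_interior.mem_nhds hint)).and
      self_mem_nhdsWithin).exists
    have h1 := hle _ (interior_subset hs)
    rw [real_inner_smul_right, hpx] at h1
    have : (0 : ℝ) < s := hs0
    linarith
  have hneg := hG x' ⟨hp', hfr⟩
  have hnonneg : 0 ≤ inner ℝ x' (G x') := by
    refine ge_of_tendsto (hplim'.inner hGx) ?_
    have hpos : ∀ᶠ n in atTop, 0 < t (φ (ψ n)) :=
      (hφ.tendsto_atTop.comp hψ.tendsto_atTop).eventually
        (ht.eventually self_mem_nhdsWithin)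
    filter_upwards [hpos] with n hn
    have hP : ‖p (φ (ψ n))‖ = 1 := by simpa using hp (φ (ψ n))
    have hX : ‖x (φ (ψ n))‖ ≤ 1 := by simpa using hx (φ (ψ n))
    have h1 := hsep (φ (ψ n)) (p (φ (ψ n))) (hball (by simp [hP]))
    have h2 := real_inner_le_norm (p (φ (ψ n))) (x (φ (ψ n)))
    rw [real_inner_self_eq_norm_sq, hP, inner_add_right, real_inner_smul_right] at h1
    rw [hP] at h2
    have h3 : 0 < t (φ (ψ n)) * inner ℝ (p (φ (ψ n))) (G (x (φ (ψ n)))) := by linarith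
    exact (pos_of_mul_pos_right h3 hn.le).le
  linarith

/-- The coordinates of the rank-one matrix `u ⊗ u`, as an element of a normed space. -/
def tensorSq {d : ℕ} (u : EuclideanSpace ℝ (Fin d)) : Fin d → Fin d → ℝ := fun i j => u i * u j

lemma continuous_tensorSq {d : ℕ} : Continuous (tensorSq (d := d)) := by
  unfold tensorSq
  fun_prop

lemma trace_tensorSq {d : ℕ} {u : EuclideanSpace ℝ (Fin d)}
    (hu : u ∈ Metric.sphere (0 : EuclideanSpace ℝ (Fin d)) 1) : ∑ i, tensorSq u i i = 1 := by
  have h1 : ‖u‖ = 1 := by simpa using hu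
  have := EuclideanSpace.real_norm_sq_eq u
  rw [h1] at this
  simp only [tensorSq, ← sq]
  linarith

lemma dual_apply_eq_sum {d : ℕ} (f : (Fin d → Fin d → ℝ) →L[ℝ] ℝ) (A : Fin d → Fin d → ℝ) :
    f A = ∑ i, ∑ j, A i j * f (Pi.single i (Pi.single j 1)) := by
  have hA : A = ∑ i, ∑ j, A i j • (Pi.single i (Pi.single j 1) : Fin d → Fin d → ℝ) := by
    ext a b
    simp [Finset.sum_apply, Pi.single_apply, ite_apply]
  conv_lhs => rw [hA]
  simp only [map_sum, map_smul, smul_eq_mul]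

/-- Affinely independent matrices `u ⊗ u` with `u` a unit vector are linearly independent, since
they lie in the hyperplane of trace one, and they live in the space of symmetric matrices, here
realised as functions on unordered pairs of indices. -/
lemma card_le_of_affineIndependent {d : ℕ} {ι : Type*} [Fintype ι]
    {u : ι → EuclideanSpace ℝ (Fin d)}
    (hu : ∀ k, u k ∈ Metric.sphere (0 : EuclideanSpace ℝ (Fin d)) 1)
    (h : AffineIndependent ℝ fun k => tensorSq (u k)) :
    Fintype.card ι ≤ d * (d + 1) / 2 := by
  let w : ι → Sym2 (Fin d) → ℝ := fun k =>
    Sym2.lift ⟨fun i j => tensorSq (u k) i j, fun i j => mul_comm _ _⟩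
  have hw : LinearIndependent ℝ w := by
    rw [Fintype.linearIndependent_iff]
    intro c hc k
    have hz : ∑ k, c k • tensorSq (u k) = 0 := by
      ext i j
      have := congrFun hc s(i, j)
      simpa [w, Finset.sum_apply] using this
    have htr : ∑ k, c k = 0 := by
      have h1 : ∑ i, (∑ k, c k • tensorSq (u k)) i i = 0 := by rw [hz]; simp
      simp only [Finset.sum_apply, Pi.smul_apply, smul_eq_mul] at h1
      rw [Finset.sum_comm] at h1
      simpa [← Finset.mul_sum, trace_tensorSq (hu _)] using h1
    exact affineIndependent_iff.mp h Finset.univ c htr hz k (Finset.mem_univ k)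
  have := hw.fintype_card_le_finrank
  rw [Module.finrank_fintype_fun_eq_card, Sym2.card, Fintype.card_fin,
    Nat.choose_two_right] at this
  rwa [Nat.add_sub_cancel, mul_comm] at this

/-- A resolution of the identity forces the vectors to span, so there are at least `d` of them. -/
lemma le_card_of_one_eq_sum {d : ℕ} {ι : Type*} [Fintype ι]
    {u : ι → EuclideanSpace ℝ (Fin d)} {lam : ι → ℝ}
    (h : ∀ i j, (1 : Matrix (Fin d) (Fin d) ℝ) i j = ∑ k, lam k * tensorSq (u k) i j) :
    d ≤ Fintype.card ι := by
  have hspan : Submodule.span ℝ (Set.range u) = ⊤ := by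
    rw [eq_top_iff]
    intro v _
    have hv : v = ∑ k, (lam k * ∑ j, u k j * v j) • u k := by
      ext i
      have h1 : v i = ∑ j, (1 : Matrix (Fin d) (Fin d) ℝ) i j * v j := by
        simp [Matrix.one_apply]
      rw [h1]
      simp only [h, tensorSq, Finset.sum_mul, WithLp.ofLp_sum, WithLp.ofLp_smul,
        Finset.sum_apply, Pi.smul_apply, smul_eq_mul, Finset.mul_sum]
      rw [Finset.sum_comm]
      refine Finset.sum_congr rfl fun k _ => Finset.sum_congr rfl fun j _ => by ring
    rw [hv]
    exact Submodule.sum_mem _ fun k _ =>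
      Submodule.smul_mem _ _ (Submodule.subset_span ⟨k, rfl⟩)
  have := finrank_range_le_card (R := ℝ) u
  rwa [Set.finrank, hspan, finrank_top, finrank_euclideanSpace_fin] at this

/-- John's theorem, hard direction, symmetric case: if the closed unit ball is the unique
ellipsoid of maximal volume inside the origin-symmetric compact convex body `C`, then the
identity matrix is a positive combination of at most `d(d+1)/2` (and at least `d`) rank-one
matrices `u ⊗ u` with `u` a contact point of the unit sphere and the boundary of `C`. -/
theorem john_symmetric_hard (d : ℕ) (hd : 1 ≤ d) (C : Set (EuclideanSpace ℝ (Fin d)))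
    (hCcpt : IsCompact C) (hCconv : Convex ℝ C) (hCsym : C = -C)
    (hball : Metric.closedBall (0 : EuclideanSpace ℝ (Fin d)) 1 ⊆ C)
    (hmax : ∀ (M : Matrix (Fin d) (Fin d) ℝ) (a : EuclideanSpace ℝ (Fin d)),
      M.det ≠ 0 →
      (fun x => Matrix.toEuclideanLin M x + a) '' Metric.closedBall 0 1 ⊆ C →
      |M.det| ≤ 1 ∧ (|M.det| = 1 →
        (fun x => Matrix.toEuclideanLin M x + a) '' Metric.closedBall 0 1 =
          Metric.closedBall (0 : EuclideanSpace ℝ (Fin d)) 1)) :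
    ∃ n : ℕ, d ≤ n ∧ n ≤ d * (d + 1) / 2 ∧
      ∃ (u : Fin n → EuclideanSpace ℝ (Fin d)) (lam : Fin n → ℝ),
        (∀ k, u k ∈ Metric.sphere (0 : EuclideanSpace ℝ (Fin d)) 1 ∩ frontier C) ∧
        (∀ k, 0 < lam k) ∧
        (1 : Matrix (Fin d) (Fin d) ℝ) = ∑ k, lam k • Matrix.vecMulVec (u k) (u k) := by
  classical
  have hCcl := hCcpt.isClosed
  have hd0 : (0 : ℝ) < d := by exact_mod_cast hd
  set X := Metric.sphere (0 : EuclideanSpace ℝ (Fin d)) 1 ∩ frontier C with hX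
  have hXc : IsCompact X := (isCompact_sphere _ _).inter_right isClosed_frontier
  let J : Fin d → Fin d → ℝ := fun i j => if i = j then (d : ℝ)⁻¹ else 0
  have hJ : J ∈ convexHull ℝ (tensorSq '' X) := by
    by_contra hJ
    obtain ⟨f, s, hf, hs⟩ := geometric_hahn_banach_closed_point (convex_convexHull ℝ _)
      (isCompact_convexHull_of_finiteDimensional (hXc.image continuous_tensorSq)).isClosed hJ
    -- Both sides have trace one, so the threshold `s` can be absorbed into the diagonal.
    obtain ⟨G, hG⟩ : ∃ G : Matrix (Fin d) (Fin d) ℝ, ∀ i j,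
        G i j = f (Pi.single i (Pi.single j 1)) - if i = j then s else 0 :=
      ⟨_, fun _ _ => rfl⟩
    have hGtr : 0 < G.trace := by
      have h1 := dual_apply_eq_sum f J
      simp only [J, ite_mul, zero_mul, Finset.sum_ite_eq, Finset.mem_univ, if_true,
        ← Finset.mul_sum] at h1
      have h2 : G.trace = ∑ i, f (Pi.single i (Pi.single i 1)) - d * s := by
        simp [Matrix.trace, hG, Finset.sum_sub_distrib]
      have h3 : d * f J = ∑ i, f (Pi.single i (Pi.single i 1)) := by
        rw [h1, mul_inv_cancel_left₀ hd0.ne']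
      rw [h2, ← h3]
      nlinarith
    have hGneg : ∀ u ∈ X, inner ℝ u ((Matrix.toEuclideanLin G).toContinuousLinearMap u) < 0 := by
      intro u hu
      have h1 := hf _ (subset_convexHull ℝ _ ⟨u, hu, rfl⟩)
      have h2 : inner ℝ u ((Matrix.toEuclideanLin G).toContinuousLinearMap u)
          = f (tensorSq u) - s * ∑ i, tensorSq u i i := by
        have happ : ∀ i, Matrix.toEuclideanLin G u i = ∑ j, G i j * u j := fun _ => rfl
        rw [dual_apply_eq_sum f]
        simp only [LinearMap.coe_toContinuousLinearMap', PiLp.inner_apply,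
          happ, hG, tensorSq, sub_mul, ite_mul,
          zero_mul, Finset.sum_sub_distrib, Finset.sum_ite_eq, Finset.mem_univ, if_true,
          RCLike.inner_apply, conj_trivial, Finset.sum_mul, Finset.mul_sum]
        congr 1
        · exact Finset.sum_congr rfl fun i _ => Finset.sum_congr rfl fun j _ => by ring
        · exact Finset.sum_congr rfl fun i _ => by ring
      rw [h2, trace_tensorSq hu.1]
      linarith
    obtain ⟨t, hdet, hsub⟩ := ((eventually_one_lt_det G hGtr).and
      (eventually_image_subset hCcl hCconv hball _ hGneg)).exists
    have := (hmax (1 + t • G) 0 (by linarith) (by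
      rintro _ ⟨x, hx, rfl⟩
      simpa [map_add, map_smul] using hsub x hx)).1
    linarith [le_abs_self (1 + t • G).det]
  obtain ⟨ι, _, z, w, hz, haff, hw, -, hsum⟩ := eq_pos_convex_span_of_mem_convexHull hJ
  have hz' : ∀ k, ∃ u ∈ X, tensorSq u = z k := fun k => hz ⟨k, rfl⟩
  choose u huX huz using hz'
  obtain rfl : (fun k => tensorSq (u k)) = z := funext huz
  have hone : ∀ i j, (1 : Matrix (Fin d) (Fin d) ℝ) i j
      = ∑ k, (d * w k) * tensorSq (u k) i j := by
    intro i j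
    have h1 := congrFun (congrFun hsum i) j
    simp only [Finset.sum_apply, Pi.smul_apply, smul_eq_mul, J] at h1
    simp only [mul_assoc, ← Finset.mul_sum]
    rw [h1, Matrix.one_apply]
    split_ifs <;> simp [hd0.ne']
  let e := (Fintype.equivFin ι).symm
  refine ⟨Fintype.card ι, le_card_of_one_eq_sum hone,
    card_le_of_affineIndependent (fun k => (huX k).1) haff,
    fun k => u (e k), fun k => d * w (e k), fun k => huX _, fun k => mul_pos hd0 (hw _), ?_⟩
  ext i j
  rw [hone i j, Matrix.sum_apply, ← e.sum_comp]
  simp [Matrix.vecMulVec_apply, tensorSq]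
end

section
/- Let d ≥ 1 and let C ⊆ ℝ^d be a compact convex set that is symmetric about the origin (C = -C) and contains the closed unit ball B^d. Suppose there exist an integer n ≥ 1, unit vectors u_1, …, u_n ∈ S^{d-1} ∩ bd C, and real numbers λ_1, …, λ_n > 0 such that the identity matrix satisfies I = Σ_{k=1}^n λ_k u_k⊗u_k. Then B^d is the unique ellipsoid of maximum volume contained in C, i.e., for every invertible d×d real matrix M and every a ∈ ℝ^d with M(B^d) + a ⊆ C one has |det M| ≤ 1, and |det M| = 1 implies M(B^d) + a = B^d. -/
/-!
A support hyperplane of `C` at a contact point `u` also supports the unit ball there, so its normal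
is `u` and `|⟪x, u⟫| ≤ 1` on `C`, using the symmetry of `C` (`abs_inner_le_one_of_contact`). Testing
this on the ellipsoid `M(B) + a` at the point where `⟪·, u⟫` is extremal gives
`‖Mᵀ u_k‖ + |⟪a, u_k⟫| ≤ 1`.
The decomposition of the identity turns `∑ λ_k ‖Mᵀ u_k‖²` into `tr (M Mᵀ)` (`trace_mul_transpose`),
and `∑ λ_k` into `d`, so `tr (M Mᵀ) ≤ d`. The arithmetic-geometric mean inequality for the
eigenvalues of the positive definite matrix `M Mᵀ` yields `(det M)² ≤ 1`, with equality only if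
`M Mᵀ = 1` (`det_le_one_of_trace_le`).
In the equality case `M` is orthogonal, so `‖Mᵀ u_k‖ = 1` forces `⟪a, u_k⟫ = 0` for every `k`; the
`u_k` span, hence `a = 0` and the ellipsoid is the ball.
-/

open RealInnerProductSpace

/-- The slab between the two tangent hyperplanes of the unit ball at `± u` contains `C` whenever `u`
is a contact point. -/
lemma abs_inner_le_one_of_contact {E : Type*} [NormedAddCommGroup E] [InnerProductSpace ℝ E]
    [CompleteSpace E] {C : Set E} (hconv : Convex ℝ C) (hsym : C = -C)
    (hball : Metric.closedBall (0 : E) 1 ⊆ C) {u : E} (hu : ‖u‖ = 1) (hfr : u ∈ frontier C)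
    {x : E} (hx : x ∈ C) : |⟪x, u⟫| ≤ 1 := by
  obtain ⟨f, hf⟩ := geometric_hahn_banach_open_point hconv.interior isOpen_interior hfr.2
  obtain ⟨w, rfl⟩ := (InnerProductSpace.toDual ℝ E).surjective f
  simp only [InnerProductSpace.toDual_apply_apply] at hf
  have h0 : (0 : E) ∈ interior C :=
    interior_mono hball (Metric.ball_subset_interior_closedBall (Metric.mem_ball_self one_pos))
  have hpos : 0 < ⟪w, u⟫ := by simpa using hf 0 h0
  have hw : 0 < ‖w‖ := by
    rw [norm_pos_iff]; rintro rfl; simp at hpos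
  have hle : ∀ y ∈ C, ⟪w, y⟫ ≤ ⟪w, u⟫ := by
    intro y hy
    have hcl : closure (interior C) ⊆ {y | ⟪w, y⟫ ≤ ⟪w, u⟫} :=
      closure_minimal (fun z hz => (hf z hz).le) (isClosed_le (by fun_prop) (by fun_prop))
    refine hcl ?_
    rw [hconv.closure_interior_eq_closure_of_nonempty_interior ⟨0, h0⟩]
    exact subset_closure hy
  -- The unit vector in the direction of `w` lies in `C`, which forces equality in Cauchy–Schwarz.
  have hwu : ‖w‖ ≤ ⟪w, u⟫ := by
    have h := hle (‖w‖⁻¹ • w) (hball (by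
      simp [norm_smul, hw.ne']))
    rw [real_inner_smul_right, real_inner_self_eq_norm_sq] at h
    field_simp at h
    exact h
  have heq : ⟪w, u⟫ = ‖w‖ * ‖u‖ :=
    le_antisymm (real_inner_le_norm w u) (by simpa [hu] using hwu)
  have hwe : w = ‖w‖ • u := by
    have := inner_eq_norm_mul_iff_real.1 heq
    simpa [hu] using this
  have key : ∀ y ∈ C, ⟪y, u⟫ ≤ 1 := by
    intro y hy
    have h := hle y hy
    rw [heq, hu, hwe, real_inner_smul_left, norm_smul, hu, real_inner_comm] at h
    simp only [norm_norm, mul_one] at h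
    nlinarith
  rw [abs_le]
  have hnx : -x ∈ C := by rw [hsym]; simpa using hx
  have := key _ hnx
  rw [inner_neg_left] at this
  exact ⟨by linarith, key x hx⟩

/-- The arithmetic-geometric mean inequality for eigenvalues, with its equality case. -/
lemma det_le_one_of_trace_le {ι : Type*} [Fintype ι] [DecidableEq ι] {S : Matrix ι ι ℝ}
    (hS : S.PosDef) (ht : S.trace ≤ Fintype.card ι) :
    S.det ≤ 1 ∧ (S.det = 1 → S = 1) := by
  have hH := hS.isHermitian
  have hpos : ∀ i, 0 < hH.eigenvalues i := fun i => hS.eigenvalues_pos i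
  have hdet : S.det = ∏ i, hH.eigenvalues i := by
    simpa using hH.det_eq_prod_eigenvalues
  have htr : ∑ i, (hH.eigenvalues i - 1) ≤ 0 := by
    have : S.trace = ∑ i, hH.eigenvalues i := by simpa using hH.trace_eq_sum_eigenvalues
    simp only [Finset.sum_sub_distrib, Finset.sum_const, Finset.card_univ, nsmul_eq_mul, mul_one]
    linarith
  have hlog : Real.log S.det = ∑ i, Real.log (hH.eigenvalues i) := by
    rw [hdet, Real.log_prod fun i _ => (hpos i).ne']
  have hle : ∀ i ∈ Finset.univ, Real.log (hH.eigenvalues i) ≤ hH.eigenvalues i - 1 :=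
    fun i _ => Real.log_le_sub_one_of_pos (hpos i)
  refine ⟨?_, fun h1 => ?_⟩
  · rw [← Real.log_nonpos_iff hS.det_pos.le, hlog]
    exact (Finset.sum_le_sum hle).trans htr
  · have hz : ∑ i, Real.log (hH.eigenvalues i) = ∑ i, (hH.eigenvalues i - 1) := by
      refine le_antisymm (Finset.sum_le_sum hle) ?_
      rw [← hlog, h1, Real.log_one]; exact htr
    have hev : ∀ i, hH.eigenvalues i = 1 := by
      intro i
      by_contra hne
      exact (Real.log_lt_sub_one_of_pos (hpos i) hne).ne
        ((Finset.sum_eq_sum_iff_of_le hle).1 hz i (Finset.mem_univ i))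
    have hdiag : Matrix.diagonal ((RCLike.ofReal : ℝ → ℝ) ∘ hH.eigenvalues) = 1 := by
      rw [← Matrix.diagonal_one]; congr 1; ext i; simp [hev]
    have h := hH.spectral_theorem
    rw [hdiag, map_one] at h
    exact h

/-- A decomposition of the identity computes the squared Frobenius norm of any matrix. -/
lemma trace_mul_transpose {d n : ℕ} {u : Fin n → EuclideanSpace ℝ (Fin d)} {lam : Fin n → ℝ}
    (hI : (1 : Matrix (Fin d) (Fin d) ℝ) = ∑ k, lam k • Matrix.vecMulVec (u k) (u k))
    (M : Matrix (Fin d) (Fin d) ℝ) :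
    (M * M.transpose).trace = ∑ k, lam k * ‖Matrix.toEuclideanLin M.transpose (u k)‖ ^ 2 := by
  have h : (M * M.transpose).trace = (M.transpose * 1 * M).trace := by
    rw [mul_one, Matrix.trace_mul_comm]
  rw [h, hI, Matrix.mul_sum, Matrix.sum_mul, Matrix.trace_sum]
  refine Finset.sum_congr rfl fun k _ => ?_
  rw [Matrix.mul_smul, Matrix.smul_mul, Matrix.trace_smul, smul_eq_mul, Matrix.mul_vecMulVec,
    Matrix.vecMulVec_mul, Matrix.trace_vecMulVec, EuclideanSpace.real_norm_sq_eq,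
    ← Matrix.mulVec_transpose]
  simp [dotProduct, sq]

lemma inner_toEuclideanLin_left {d : ℕ} (M : Matrix (Fin d) (Fin d) ℝ)
    (x y : EuclideanSpace ℝ (Fin d)) :
    ⟪Matrix.toEuclideanLin M x, y⟫ = ⟪x, Matrix.toEuclideanLin M.transpose y⟫ := by
  rw [← Matrix.conjTranspose_eq_transpose_of_trivial, Matrix.toEuclideanLin_conjTranspose_eq_adjoint,
    LinearMap.adjoint_inner_right]

/-- John's theorem, easy direction, symmetric case: if the identity matrix is a positive
combination of rank-one matrices `u ⊗ u` with `u` contact points of the unit sphere and the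
boundary of the origin-symmetric compact convex body `C ⊇ B^d`, then the closed unit ball is
the unique ellipsoid of maximal volume contained in `C`. -/
theorem john_symmetric_easy (d : ℕ) (hd : 1 ≤ d) (C : Set (EuclideanSpace ℝ (Fin d)))
    (hCcpt : IsCompact C) (hCconv : Convex ℝ C) (hCsym : C = -C)
    (hball : Metric.closedBall (0 : EuclideanSpace ℝ (Fin d)) 1 ⊆ C)
    (n : ℕ) (hn : 1 ≤ n)
    (u : Fin n → EuclideanSpace ℝ (Fin d)) (lam : Fin n → ℝ)
    (hu : ∀ k, u k ∈ Metric.sphere (0 : EuclideanSpace ℝ (Fin d)) 1 ∩ frontier C)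
    (hlam : ∀ k, 0 < lam k)
    (hI : (1 : Matrix (Fin d) (Fin d) ℝ) = ∑ k, lam k • Matrix.vecMulVec (u k) (u k)) :
    ∀ (M : Matrix (Fin d) (Fin d) ℝ) (a : EuclideanSpace ℝ (Fin d)),
      M.det ≠ 0 →
      (fun x => Matrix.toEuclideanLin M x + a) '' Metric.closedBall 0 1 ⊆ C →
      |M.det| ≤ 1 ∧ (|M.det| = 1 →
        (fun x => Matrix.toEuclideanLin M x + a) '' Metric.closedBall 0 1 =
          Metric.closedBall (0 : EuclideanSpace ℝ (Fin d)) 1) := by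
  intro M a hM hsub
  have hu1 : ∀ k, ‖u k‖ = 1 := fun k => by simpa using (hu k).1
  have hkey : ∀ k, ‖Matrix.toEuclideanLin M.transpose (u k)‖ + |⟪a, u k⟫| ≤ 1 := by
    intro k
    set v := Matrix.toEuclideanLin M.transpose (u k) with hv
    have hx : ∀ x ∈ Metric.closedBall (0 : EuclideanSpace ℝ (Fin d)) 1,
        |⟪x, v⟫ + ⟪a, u k⟫| ≤ 1 := by
      intro x hx
      have h := abs_inner_le_one_of_contact hCconv hCsym hball (hu1 k) (hu k).2 (hsub ⟨x, hx, rfl⟩)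
      rwa [inner_add_left, inner_toEuclideanLin_left] at h
    -- The normalized vector; it is `0` when `v = 0`, which is harmless.
    have hb : ‖‖v‖⁻¹ • v‖ ≤ 1 := by
      rw [norm_smul, norm_inv, norm_norm]; exact inv_mul_le_one
    have hi : ⟪‖v‖⁻¹ • v, v⟫ = ‖v‖ := by
      rw [real_inner_smul_left, real_inner_self_eq_norm_sq]
      by_cases h0 : ‖v‖ = 0
      · simp [h0]
      · field_simp
    have h1 := hx (‖v‖⁻¹ • v) (by simpa using hb)
    have h2 := hx (-(‖v‖⁻¹ • v)) (by rw [mem_closedBall_zero_iff, norm_neg]; exact hb)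
    rw [hi] at h1
    rw [inner_neg_left, hi] at h2
    rw [abs_le] at h1 h2
    rcases abs_cases ⟪a, u k⟫ with h | h <;> linarith [h.1]
  have hsum : ∑ k, lam k = d := by
    have h := trace_mul_transpose hI 1
    simp [hu1] at h
    exact h.symm
  have htr : (M * M.transpose).trace ≤ Fintype.card (Fin d) := by
    rw [trace_mul_transpose hI, Fintype.card_fin, ← hsum]
    refine Finset.sum_le_sum fun k _ => mul_le_of_le_one_right (hlam k).le ?_
    exact pow_le_one₀ (norm_nonneg _) (by linarith [hkey k, abs_nonneg ⟪a, u k⟫])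
  have hpd : (M * M.transpose).PosDef := by
    have hinj : Function.Injective fun v => Matrix.vecMul v M :=
      Matrix.vecMul_injective_of_isUnit ((Matrix.isUnit_iff_isUnit_det M).2 hM.isUnit)
    simpa using Matrix.PosDef.mul_conjTranspose_self M hinj
  have hdet : (M * M.transpose).det = |M.det| ^ 2 := by
    rw [Matrix.det_mul, Matrix.det_transpose, sq_abs, sq]
  obtain ⟨hle, heq⟩ := det_le_one_of_trace_le hpd htr
  rw [hdet] at hle heq
  refine ⟨by nlinarith [abs_nonneg M.det], fun h1 => ?_⟩
  have hMMt : M * M.transpose = 1 := heq (by rw [h1, one_pow])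
  have hMtM : M.transpose * M = 1 := mul_eq_one_comm.1 hMMt
  have hcomp : ∀ (A B : Matrix (Fin d) (Fin d) ℝ), A * B = 1 → ∀ x,
      Matrix.toEuclideanLin A (Matrix.toEuclideanLin B x) = x := by
    intro A B h x
    ext i
    simp [Matrix.toLpLin_apply, h]
  have hnorm : ∀ (A : Matrix (Fin d) (Fin d) ℝ), A.transpose * A = 1 → ∀ x,
      ‖Matrix.toEuclideanLin A x‖ = ‖x‖ := by
    intro A h x
    rw [← sq_eq_sq₀ (norm_nonneg _) (norm_nonneg _), ← real_inner_self_eq_norm_sq,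
      inner_toEuclideanLin_left, hcomp _ _ h, real_inner_self_eq_norm_sq]
  have hnt := hnorm M.transpose (by rwa [Matrix.transpose_transpose])
  have hau : ∀ k, ⟪a, u k⟫ = 0 := by
    intro k
    have h := hkey k
    rw [hnt, hu1] at h
    exact abs_nonpos_iff.1 (by linarith)
  have ha : a = 0 := by
    have h : Matrix.mulVec (1 : Matrix (Fin d) (Fin d) ℝ) (a : Fin d → ℝ) = 0 := by
      rw [hI, Matrix.sum_mulVec]
      refine Finset.sum_eq_zero fun k _ => ?_
      have h' : (u k : Fin d → ℝ) ⬝ᵥ a = 0 := by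
        rw [← hau k, PiLp.inner_apply]; simp [dotProduct]
      rw [Matrix.smul_mulVec, Matrix.vecMulVec_mulVec, h']
      simp
    rw [Matrix.one_mulVec] at h
    ext i
    exact congrFun h i
  subst ha
  ext y
  simp only [add_zero, Set.mem_image, mem_closedBall_zero_iff]
  constructor
  · rintro ⟨x, hx, rfl⟩
    rwa [hnorm M hMtM]
  · intro hy
    exact ⟨Matrix.toEuclideanLin M.transpose y, by rwa [hnt], hcomp _ _ hMMt y⟩
end

section
/- Let d ≥ 1 and let C ⊆ ℝ^d be a compact convex set containing the closed unit ball B^d. Suppose there exist an integer n ≥ 1, unit vectors u_1, …, u_n ∈ S^{d-1} ∩ bd C, and real numbers λ_1, …, λ_n > 0 such that I = Σ_{k=1}^n λ_k u_k⊗u_k and 0 = Σ_{k=1}^n λ_k u_k. Then B^d is the unique ellipsoid of maximum volume contained in C, i.e., for every invertible d×d real matrix M and every a ∈ ℝ^d with M(B^d) + a ⊆ C one has |det M| ≤ 1, and |det M| = 1 implies M(B^d) + a = B^d. -/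
/-!
Each contact point `u k` carries the supporting half-space `{x | ⟪x, u k⟫ ≤ 1}` of `C`
(`inner_le_one_of_frontier`), so `M B + a ⊆ C` gives `‖Mᵀ u k‖ + ⟪a, u k⟫ ≤ 1`
(`norm_add_inner_le_one`).  Let `P` be the positive semidefinite square root of `M Mᵀ`; then
`‖Mᵀ u k‖ = ‖P u k‖ ≥ ⟪u k, P u k⟫`.  Summing with the weights `lam k`, the terms in `a` cancel
because `∑ lam k • u k = 0`, and the decomposition of the identity turns the rest into
`tr P ≤ ∑ lam k = tr 1 = d`.  By the inequality of arithmetic and geometric means for the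
eigenvalues of `P`, `|det M| = det P ≤ 1`, with equality only if `P = 1`
(`det_le_one_of_trace_le`).

If `P = 1` then `M` is orthogonal, so `M B = B`, and `‖Mᵀ u k‖ = 1` forces `⟪a, u k⟫ ≤ 0` for
every `k`.  These numbers have weighted sum `0`, hence all vanish, and `a = 0` because the `u k`
span the space.
-/

open RealInnerProductSpace

open scoped InnerProductSpace

section JohnHelpers

/-- The tangent half-space of the unit ball at a contact point contains the whole body: a point
of `C` beyond it would, together with the ball, put the contact point in the interior of `C`. -/
lemma inner_le_one_of_frontier {d : ℕ} {C : Set (EuclideanSpace ℝ (Fin d))}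
    (hC : Convex ℝ C) (hball : Metric.closedBall (0 : EuclideanSpace ℝ (Fin d)) 1 ⊆ C)
    {u x : EuclideanSpace ℝ (Fin d)} (hu : ‖u‖ = 1) (hf : u ∈ frontier C) (hx : x ∈ C) :
    ⟪x, u⟫_ℝ ≤ 1 := by
  by_contra! h
  set c := ⟪x, u⟫_ℝ - 1 with hc
  have hc0 : 0 < c := by linarith
  set w := x - u with hw
  have hwu : ⟪u, w⟫_ℝ = c := by
    rw [hw, inner_sub_right, real_inner_self_eq_norm_sq, hu, real_inner_comm, hc]; norm_num
  -- a step `t` from `u` directly away from `x` enters the open ball once `t * ‖w‖ ^ 2 < 2 * c`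
  set t := c / (‖w‖ ^ 2 + 1) with ht
  have ht0 : 0 < t := by positivity
  have htw : t * (‖w‖ ^ 2 + 1) = c := by rw [ht]; field_simp
  have hn : ‖u - t • w‖ ^ 2 < 1 := by
    rw [norm_sub_sq_real, inner_smul_right, hwu, norm_smul, hu, Real.norm_of_nonneg ht0.le]
    nlinarith [mul_pos ht0 hc0, mul_pos ht0 ht0]
  have hy : u - t • w ∈ interior C := by
    have : u - t • w ∈ Metric.ball (0 : EuclideanSpace ℝ (Fin d)) 1 := by
      rw [mem_ball_zero_iff]
      nlinarith [norm_nonneg (u - t • w)]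
    exact interior_mono hball (Metric.ball_subset_interior_closedBall this)
  refine hf.2 (hC.openSegment_interior_self_subset_interior hy hx
    ⟨1 / (1 + t), t / (1 + t), by positivity, by positivity, by field_simp, ?_⟩)
  have h1 : (1 + t) ≠ 0 := by positivity
  rw [hw]
  match_scalars <;> field_simp <;> ring

lemma inner_toEuclideanLin_transpose {d : ℕ} (A : Matrix (Fin d) (Fin d) ℝ)
    (x y : EuclideanSpace ℝ (Fin d)) :
    ⟪Matrix.toEuclideanLin A x, y⟫_ℝ = ⟪x, Matrix.toEuclideanLin A.transpose y⟫_ℝ := by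
  simp only [EuclideanSpace.inner_eq_star_dotProduct, Matrix.ofLp_toLpLin, Matrix.toLin'_apply,
    star_trivial]
  rw [Matrix.dotProduct_mulVec, Matrix.mulVec_transpose, dotProduct_comm]

/-- The support function of the ellipsoid `A B + a` in direction `u` is
`‖Aᵀ u‖ + ⟪a, u⟫`; a bound for it on the ellipsoid is a bound for this value. -/
lemma norm_add_inner_le_one {d : ℕ} (A : Matrix (Fin d) (Fin d) ℝ)
    (a u : EuclideanSpace ℝ (Fin d))
    (h : ∀ x ∈ Metric.closedBall (0 : EuclideanSpace ℝ (Fin d)) 1,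
      ⟪Matrix.toEuclideanLin A x + a, u⟫_ℝ ≤ 1) :
    ‖Matrix.toEuclideanLin A.transpose u‖ + ⟪a, u⟫_ℝ ≤ 1 := by
  set w := Matrix.toEuclideanLin A.transpose u with hw
  have hx : ‖w‖⁻¹ • w ∈ Metric.closedBall (0 : EuclideanSpace ℝ (Fin d)) 1 := by
    rw [mem_closedBall_zero_iff, norm_smul, norm_inv, norm_norm]
    exact inv_mul_le_one
  have h2 := h _ hx
  rw [inner_add_left, inner_toEuclideanLin_transpose, ← hw, real_inner_smul_left,
    real_inner_self_eq_norm_sq] at h2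
  -- also valid for `w = 0`, where the inverse is `0`
  have h3 : ‖w‖⁻¹ * ‖w‖ ^ 2 = ‖w‖ := by
    by_cases h0 : ‖w‖ = 0
    · simp [h0]
    · field_simp
  linarith

/-- The arithmetic-geometric mean inequality, normalized so that the mean is at most `1`, with its
equality case; both come from `p ≤ exp (p - 1)`, which is strict unless `p = 1`. -/
lemma prod_le_one_of_sum_le {ι : Type*} [Fintype ι] (p : ι → ℝ) (hp : ∀ i, 0 < p i)
    (hs : ∑ i, p i ≤ Fintype.card ι) : ∏ i, p i ≤ 1 ∧ (∏ i, p i = 1 → ∀ i, p i = 1) := by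
  have hexp : ∏ i, Real.exp (p i - 1) ≤ 1 := by
    rw [← Real.exp_sum, Real.exp_le_one_iff]
    simpa using hs
  have hle : ∀ i, p i ≤ Real.exp (p i - 1) := fun i => by
    linarith [Real.add_one_le_exp (p i - 1)]
  refine ⟨(Finset.prod_le_prod (fun i _ => (hp i).le) fun i _ => hle i).trans hexp, ?_⟩
  intro h1 i
  by_contra hi
  have : ∏ i, p i < ∏ i, Real.exp (p i - 1) :=
    Finset.prod_lt_prod (fun i _ => hp i) (fun i _ => hle i)
      ⟨i, Finset.mem_univ i, by
        linarith [Real.add_one_lt_exp (x := p i - 1) (sub_ne_zero.mpr hi)]⟩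
  linarith

/-- The arithmetic-geometric mean inequality for the eigenvalues of `P`. -/
lemma det_le_one_of_trace_le_s3 {d : ℕ} {P : Matrix (Fin d) (Fin d) ℝ} (hP : P.PosDef)
    (ht : P.trace ≤ d) : P.det ≤ 1 ∧ (P.det = 1 → P = 1) := by
  have h := prod_le_one_of_sum_le hP.1.eigenvalues hP.eigenvalues_pos (by
    have := hP.1.trace_eq_sum_eigenvalues
    simp only [RCLike.ofReal_real_eq_id, id] at this
    rw [← this]; simpa using ht)
  have hdet := hP.1.det_eq_prod_eigenvalues
  simp only [RCLike.ofReal_real_eq_id, id] at hdet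
  rw [hdet]
  refine ⟨h.1, fun h1 => ?_⟩
  have h2 := hP.1.spectral_theorem
  have h3 : (RCLike.ofReal ∘ hP.1.eigenvalues : Fin d → ℝ) = 1 := by
    funext i; simp [h.2 h1 i]
  rw [h3] at h2
  rw [h2, Matrix.diagonal_one', map_one]

/-- The polar factor: a positive definite `P` with `P² = M Mᵀ`. -/
lemma exists_polar {d : ℕ} {M : Matrix (Fin d) (Fin d) ℝ} (hM : M.det ≠ 0) :
    ∃ P : Matrix (Fin d) (Fin d) ℝ, P.PosDef ∧ P * P = M * M.transpose ∧ P.det = |M.det| := by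
  open scoped MatrixOrder in
  have hS : (M * M.transpose).PosSemidef := Matrix.posSemidef_self_mul_conjTranspose M
  open scoped MatrixOrder in
  have hPs : (CFC.sqrt (M * M.transpose)).PosSemidef :=
    Matrix.nonneg_iff_posSemidef.mp (CFC.sqrt_nonneg _)
  open scoped MatrixOrder in
  have hPP : CFC.sqrt (M * M.transpose) * CFC.sqrt (M * M.transpose) = M * M.transpose :=
    CFC.sqrt_mul_sqrt_self _ (Matrix.nonneg_iff_posSemidef.mpr hS)
  open scoped MatrixOrder in
  generalize CFC.sqrt (M * M.transpose) = P at hPs hPP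
  have hdet : P.det = |M.det| := by
    have h := congrArg Matrix.det hPP
    rw [Matrix.det_mul, Matrix.det_mul, Matrix.det_transpose] at h
    rw [← abs_of_nonneg hPs.det_nonneg]
    exact abs_eq_abs.mpr (mul_self_eq_mul_self_iff.mp h)
  exact ⟨P, hPs.posDef_iff_det_ne_zero.mpr (by rw [hdet]; exact abs_ne_zero.mpr hM), hPP, hdet⟩

lemma norm_sq_toEuclideanLin_transpose {d : ℕ} (A : Matrix (Fin d) (Fin d) ℝ)
    (x : EuclideanSpace ℝ (Fin d)) :
    ‖Matrix.toEuclideanLin A.transpose x‖ ^ 2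
      = ⟪x, Matrix.toEuclideanLin (A * A.transpose) x⟫_ℝ := by
  rw [← real_inner_self_eq_norm_sq, inner_toEuclideanLin_transpose, Matrix.transpose_transpose]
  simp [Matrix.toLpLin_apply]

/-- Obtained by writing `A = A * 1` and expanding `1` in the given decomposition. -/
lemma trace_eq_sum_inner {d n : ℕ} {u : Fin n → EuclideanSpace ℝ (Fin d)} {lam : Fin n → ℝ}
    (hI : (1 : Matrix (Fin d) (Fin d) ℝ) = ∑ k, lam k • Matrix.vecMulVec (u k) (u k))
    (A : Matrix (Fin d) (Fin d) ℝ) :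
    A.trace = ∑ k, lam k * ⟪u k, Matrix.toEuclideanLin A (u k)⟫_ℝ := by
  conv_lhs => rw [← mul_one A, hI, Finset.mul_sum, Matrix.trace_sum]
  refine Finset.sum_congr rfl fun k _ => ?_
  rw [Matrix.mul_smul, Matrix.trace_smul, Matrix.mul_vecMulVec, Matrix.trace_vecMulVec,
    EuclideanSpace.inner_eq_star_dotProduct, Matrix.ofLp_toLpLin, Matrix.toLin'_apply, star_trivial,
    smul_eq_mul]

/-- Applying the decomposition to `a` gives `a = ∑ lam k • ⟪a, u k⟫ • u k`. -/
lemma eq_zero_of_inner_eq_zero {d n : ℕ} {u : Fin n → EuclideanSpace ℝ (Fin d)}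
    {lam : Fin n → ℝ}
    (hI : (1 : Matrix (Fin d) (Fin d) ℝ) = ∑ k, lam k • Matrix.vecMulVec (u k) (u k))
    {a : EuclideanSpace ℝ (Fin d)} (h : ∀ k, ⟪a, u k⟫_ℝ = 0) : a = 0 := by
  have h1 : (1 : Matrix (Fin d) (Fin d) ℝ).mulVec a.ofLp = 0 := by
    rw [hI, Matrix.sum_mulVec]
    refine Finset.sum_eq_zero fun k _ => ?_
    have hk := h k
    rw [EuclideanSpace.inner_eq_star_dotProduct, star_trivial] at hk
    rw [Matrix.smul_mulVec, Matrix.vecMulVec_mulVec, hk]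
    simp
  rw [Matrix.one_mulVec] at h1
  ext i
  simpa using congrFun h1 i

lemma image_closedBall_of_mul_transpose {d : ℕ} {M : Matrix (Fin d) (Fin d) ℝ}
    (h : M * M.transpose = 1) :
    (fun x => Matrix.toEuclideanLin M x + 0) '' Metric.closedBall 0 1 =
      Metric.closedBall (0 : EuclideanSpace ℝ (Fin d)) 1 := by
  have h' : M.transpose * M = 1 := mul_eq_one_comm.mp h
  have hn : ∀ A : Matrix (Fin d) (Fin d) ℝ, A * A.transpose = 1 →
      ∀ x : EuclideanSpace ℝ (Fin d), ‖Matrix.toEuclideanLin A.transpose x‖ = ‖x‖ := by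
    intro A hA x
    have := norm_sq_toEuclideanLin_transpose A x
    rw [hA, Matrix.toLpLin_one, LinearMap.id_apply, real_inner_self_eq_norm_sq] at this
    exact (sq_eq_sq₀ (norm_nonneg _) (norm_nonneg _)).mp this
  ext y
  simp only [Set.mem_image, mem_closedBall_zero_iff, add_zero]
  constructor
  · rintro ⟨x, hx, rfl⟩
    have := hn M.transpose (by rwa [Matrix.transpose_transpose]) x
    rw [Matrix.transpose_transpose] at this
    rwa [this]
  · intro hy
    refine ⟨Matrix.toEuclideanLin M.transpose y, by rwa [hn M h], ?_⟩
    simp [Matrix.toLpLin_apply, h]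

end JohnHelpers

/-- John's theorem, easy direction, general case: a John-type decomposition
`I = ∑ lam k • u k ⊗ u k`, `0 = ∑ lam k • u k` with contact points `u k` implies that the
closed unit ball is the unique ellipsoid of maximal volume in the compact convex body
`C ⊇ B^d`. -/
theorem john_general_easy (d : ℕ) (hd : 1 ≤ d) (C : Set (EuclideanSpace ℝ (Fin d)))
    (hCcpt : IsCompact C) (hCconv : Convex ℝ C)
    (hball : Metric.closedBall (0 : EuclideanSpace ℝ (Fin d)) 1 ⊆ C)
    (n : ℕ) (hn : 1 ≤ n)
    (u : Fin n → EuclideanSpace ℝ (Fin d)) (lam : Fin n → ℝ)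
    (hu : ∀ k, u k ∈ Metric.sphere (0 : EuclideanSpace ℝ (Fin d)) 1 ∩ frontier C)
    (hlam : ∀ k, 0 < lam k)
    (hI : (1 : Matrix (Fin d) (Fin d) ℝ) = ∑ k, lam k • Matrix.vecMulVec (u k) (u k))
    (hbar : (0 : EuclideanSpace ℝ (Fin d)) = ∑ k, lam k • u k) :
    ∀ (M : Matrix (Fin d) (Fin d) ℝ) (a : EuclideanSpace ℝ (Fin d)),
      M.det ≠ 0 →
      (fun x => Matrix.toEuclideanLin M x + a) '' Metric.closedBall 0 1 ⊆ C →
      |M.det| ≤ 1 ∧ (|M.det| = 1 →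
        (fun x => Matrix.toEuclideanLin M x + a) '' Metric.closedBall 0 1 =
          Metric.closedBall (0 : EuclideanSpace ℝ (Fin d)) 1) := by
  intro M a hM hsub
  have hu1 : ∀ k, ‖u k‖ = 1 := fun k => mem_sphere_zero_iff_norm.mp (hu k).1
  have hsupp : ∀ k, ‖Matrix.toEuclideanLin M.transpose (u k)‖ + ⟪a, u k⟫_ℝ ≤ 1 := fun k =>
    norm_add_inner_le_one M a (u k) fun x hx =>
      inner_le_one_of_frontier hCconv hball (hu1 k) (hu k).2 (hsub ⟨x, hx, rfl⟩)
  have hsum : ∑ k, lam k = d := by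
    have h := trace_eq_sum_inner hI 1
    simp only [Matrix.trace_one, Fintype.card_fin, Matrix.toLpLin_one, LinearMap.id_apply,
      real_inner_self_eq_norm_sq, hu1] at h
    simpa using h.symm
  have hbar' : ∑ k, lam k * ⟪a, u k⟫_ℝ = 0 := by
    have h := congrArg (fun v => ⟪a, v⟫_ℝ) hbar
    simp only [inner_zero_right, inner_sum, inner_smul_right] at h
    exact h.symm
  obtain ⟨P, hP, hPP, hPdet⟩ := exists_polar hM
  have hPt : P.transpose = P := by simpa using hP.1.eq
  have hPM : ∀ k, ⟪u k, Matrix.toEuclideanLin P (u k)⟫_ℝ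
      ≤ ‖Matrix.toEuclideanLin M.transpose (u k)‖ := by
    intro k
    have h1 := norm_sq_toEuclideanLin_transpose M (u k)
    have h2 := norm_sq_toEuclideanLin_transpose P (u k)
    rw [hPt, hPP, ← h1] at h2
    have h3 := (sq_eq_sq₀ (norm_nonneg _) (norm_nonneg _)).mp h2
    have h4 := real_inner_le_norm (u k) (Matrix.toEuclideanLin P (u k))
    rwa [hu1, one_mul, h3] at h4
  have htr : P.trace ≤ d := by
    have h : ∑ k, lam k * ⟪u k, Matrix.toEuclideanLin P (u k)⟫_ℝ
        ≤ ∑ k, (lam k - lam k * ⟪a, u k⟫_ℝ) :=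
      Finset.sum_le_sum fun k _ => by nlinarith [hPM k, hsupp k, hlam k]
    rw [Finset.sum_sub_distrib, hbar', hsum, sub_zero] at h
    rwa [trace_eq_sum_inner hI P]
  have hdet := det_le_one_of_trace_le_s3 hP htr
  rw [hPdet] at hdet
  refine ⟨hdet.1, fun h1 => ?_⟩
  have hP1 := hdet.2 h1
  have hMM : M * M.transpose = 1 := by rw [← hPP, hP1, one_mul]
  have hle : ∀ k, ⟪a, u k⟫_ℝ ≤ 0 := by
    intro k
    have h := hPM k
    rw [hP1, Matrix.toLpLin_one, LinearMap.id_apply, real_inner_self_eq_norm_sq, hu1] at h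
    linarith [hsupp k]
  have hzero : ∀ k, ⟪a, u k⟫_ℝ = 0 := by
    have h := (Finset.sum_eq_zero_iff_of_nonpos fun k _ =>
      mul_nonpos_of_nonneg_of_nonpos (hlam k).le (hle k)).mp hbar'
    exact fun k => (mul_eq_zero.mp (h k (Finset.mem_univ k))).resolve_left (hlam k).ne'
  rw [eq_zero_of_inner_eq_zero hI hzero]
  exact image_closedBall_of_mul_transpose hMM
end
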